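/- arXiv:2302.05365 — 7 statements merged into one kernel-verified Lean document; each statement's English description precedes it below -/
import Mathlib

section
/- Let n ≥ 1 and k ≥ 1 be integers and let Q_{n,k} ∈ ℚ[t] be as in the context, with coefficients q_d (the coefficient of t^d). Then Q_{n,k} has degree at most nk+1 (i.e. q_d = 0 for all d > nk+1), and its coefficients are antisymmetric with respect to the degree: q_d = −q_{nk+1−d} for all 0 ≤ d ≤ nk+1. -/
/-!
Reflection `p ↦ X ^ N * p (1 / X)` is multiplicative when `N` is a sum of degree bounds for the
factors, and it negates `1 - X ^ m` for `N = m`. The numerator has one factor more than the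
denominator, so cancelling the denominator, whose leading coefficient is `± 1`, shows that
reflection negates `Q`. The relevant degree is `∑_{i=1}^{k} (n + i) - ∑_{i=2}^{k} i = n * k + 1`.
-/

section

open Polynomial Finset
open scoped nonZeroDivisors

variable {ι R : Type*}

lemma reflect_prod [CommSemiring R] (s : Finset ι) (p : ι → R[X]) (N : ι → ℕ)
    (hp : ∀ i ∈ s, (p i).natDegree ≤ N i) :
    reflect (∑ i ∈ s, N i) (∏ i ∈ s, p i) = ∏ i ∈ s, reflect (N i) (p i) := by
  classical
  induction s using Finset.induction_on with
  | empty => simp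
  | insert a s ha ih =>
    rw [forall_mem_insert] at hp
    have hdeg : (∏ i ∈ s, p i).natDegree ≤ ∑ i ∈ s, N i :=
      (natDegree_prod_le s p).trans (sum_le_sum hp.2)
    rw [sum_insert ha, prod_insert ha, prod_insert ha, reflect_mul _ _ hp.1 hdeg, ih hp.2]

section OneSubXPow

lemma reflect_one_sub_X_pow [Ring R] (m : ℕ) :
    reflect m (1 - X ^ m : R[X]) = -(1 - X ^ m) := by
  simp [reflect_sub, reflect_one, reflect_monomial, revAt_le]

lemma natDegree_one_sub_X_pow [Ring R] [Nontrivial R] (m : ℕ) :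
    (1 - X ^ m : R[X]).natDegree = m := by
  rw [← natDegree_neg, neg_sub, ← C_1, natDegree_X_pow_sub_C]

lemma natDegree_one_sub_X_pow_le [Ring R] (m : ℕ) : (1 - X ^ m : R[X]).natDegree ≤ m := by
  nontriviality R
  exact (natDegree_one_sub_X_pow m).le

lemma leadingCoeff_one_sub_X_pow [Ring R] {m : ℕ} (hm : m ≠ 0) :
    (1 - X ^ m : R[X]).leadingCoeff = -1 := by
  have hmonic : (X ^ m - 1 : R[X]).Monic := by simpa using monic_X_pow_sub_C (1 : R) hm
  rw [← neg_sub (X ^ m) 1, leadingCoeff_neg, hmonic.leadingCoeff]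

variable [CommRing R] (s : Finset ι) (f : ι → ℕ)

lemma reflect_prod_one_sub_X_pow :
    reflect (∑ i ∈ s, f i) (∏ i ∈ s, (1 - X ^ f i : R[X])) =
      (-1) ^ #s * ∏ i ∈ s, (1 - X ^ f i) := by
  calc
    _ = ∏ i ∈ s, reflect (f i) (1 - X ^ f i : R[X]) :=
      reflect_prod s (fun i ↦ 1 - X ^ f i) f fun i _ ↦ natDegree_one_sub_X_pow_le (f i)
    _ = ∏ i ∈ s, -(1 - X ^ f i : R[X]) := prod_congr rfl fun i _ ↦ reflect_one_sub_X_pow (f i)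
    _ = (-1) ^ #s * ∏ i ∈ s, (1 - X ^ f i) := prod_neg _

lemma natDegree_prod_one_sub_X_pow_le :
    (∏ i ∈ s, (1 - X ^ f i : R[X])).natDegree ≤ ∑ i ∈ s, f i :=
  (natDegree_prod_le s _).trans (sum_le_sum fun i _ ↦ natDegree_one_sub_X_pow_le (f i))

variable {s f}

lemma prod_leadingCoeff_one_sub_X_pow (hf : ∀ i ∈ s, f i ≠ 0) :
    ∏ i ∈ s, (1 - X ^ f i : R[X]).leadingCoeff = (-1) ^ #s := by
  rw [prod_congr rfl fun i hi ↦ leadingCoeff_one_sub_X_pow (hf i hi), prod_const]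

lemma prod_leadingCoeff_one_sub_X_pow_ne_zero [Nontrivial R] (hf : ∀ i ∈ s, f i ≠ 0) :
    ∏ i ∈ s, (1 - X ^ f i : R[X]).leadingCoeff ≠ 0 := by
  rw [prod_leadingCoeff_one_sub_X_pow hf]
  exact (isUnit_neg_one.pow #s).ne_zero

lemma leadingCoeff_prod_one_sub_X_pow (hf : ∀ i ∈ s, f i ≠ 0) :
    (∏ i ∈ s, (1 - X ^ f i : R[X])).leadingCoeff = (-1) ^ #s := by
  nontriviality R
  rw [leadingCoeff_prod' s _ (prod_leadingCoeff_one_sub_X_pow_ne_zero hf),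
    prod_leadingCoeff_one_sub_X_pow hf]

lemma natDegree_prod_one_sub_X_pow [Nontrivial R] (hf : ∀ i ∈ s, f i ≠ 0) :
    (∏ i ∈ s, (1 - X ^ f i : R[X])).natDegree = ∑ i ∈ s, f i := by
  rw [natDegree_prod' s _ (prod_leadingCoeff_one_sub_X_pow_ne_zero hf)]
  simp only [natDegree_one_sub_X_pow]

end OneSubXPow

lemma natDegree_le_of_natDegree_mul_le [Semiring R] {p q : R[X]} {N : ℕ}
    (hq : q.leadingCoeff ∈ R⁰) (h : (p * q).natDegree ≤ N + q.natDegree) :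
    p.natDegree ≤ N := by
  obtain rfl | hp := eq_or_ne p 0
  · simp
  have hlead : p.leadingCoeff * q.leadingCoeff ≠ 0 := fun h0 ↦
    hp (leadingCoeff_eq_zero.mp ((mul_right_mem_nonZeroDivisors_eq_zero_iff hq).mp h0))
  rw [natDegree_mul' hlead] at h
  exact Nat.le_of_add_le_add_right h

lemma mul_reflect_eq_of_reflect_mul_eq [CommRing R] {p q a b : R[X]} {M N : ℕ}
    (hq : q ∈ R[X]⁰) (hpN : p.natDegree ≤ N) (hqM : q.natDegree ≤ M)
    (ha : reflect M q = a * q) (hb : reflect (N + M) (p * q) = b * (p * q)) :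
    a * reflect N p = b * p := by
  rw [reflect_mul p q hpN hqM, ha] at hb
  rw [← mul_cancel_right_mem_nonZeroDivisors hq]
  linear_combination hb

theorem natDegree_le_and_reflect_eq_of_mul_prod_one_sub_X_pow_eq [CommRing R] {κ : Type*}
    {s : Finset ι} {t : Finset κ} {f : ι → ℕ} {g : κ → ℕ} {N : ℕ} {Q : R[X]}
    (hf : ∀ i ∈ s, f i ≠ 0) (hN : ∑ j ∈ t, g j = N + ∑ i ∈ s, f i)
    (hQ : Q * ∏ i ∈ s, (1 - X ^ f i) = ∏ j ∈ t, (1 - X ^ g j)) :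
    Q.natDegree ≤ N ∧ reflect N Q = (-1) ^ (#s + #t) * Q := by
  nontriviality R
  have hlead : (∏ i ∈ s, (1 - X ^ f i : R[X])).leadingCoeff ∈ R⁰ := by
    rw [leadingCoeff_prod_one_sub_X_pow hf]
    exact (isUnit_neg_one.pow #s).mem_nonZeroDivisors
  have hdeg : Q.natDegree ≤ N := by
    refine natDegree_le_of_natDegree_mul_le hlead ?_
    rw [hQ, natDegree_prod_one_sub_X_pow hf, ← hN]
    exact natDegree_prod_one_sub_X_pow_le t g
  have hrefl : (-1) ^ #s * reflect N Q = (-1) ^ #t * Q := by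
    refine mul_reflect_eq_of_reflect_mul_eq (mem_nonZeroDivisors_of_leadingCoeff hlead) hdeg
      (natDegree_prod_one_sub_X_pow_le s f) (reflect_prod_one_sub_X_pow s f) ?_
    rw [hQ, ← hN, reflect_prod_one_sub_X_pow]
  refine ⟨hdeg, ?_⟩
  rw [pow_add, mul_assoc, ← hrefl, ← mul_assoc, ← mul_pow, neg_one_mul, neg_neg, one_pow, one_mul]

lemma sum_Icc_one_add_eq (n : ℕ) {k : ℕ} (hk : 1 ≤ k) :
    ∑ i ∈ Icc 1 k, (n + i) = n * k + 1 + ∑ i ∈ Icc 2 k, i := by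
  have hsplit : ∑ i ∈ Icc 1 k, i = 1 + ∑ i ∈ Icc 2 k, i := by
    rw [← insert_Icc_add_one_left_eq_Icc hk, sum_insert (by simp), one_add_one_eq_two]
  rw [sum_add_distrib, sum_const, Nat.card_Icc, Nat.add_sub_cancel, hsplit, smul_eq_mul]
  ring

theorem kloosterman_Q_antisymmetric_general [CommRing R] (n k : ℕ) (hk : 1 ≤ k) (Q : R[X])
    (hQ : Q * ∏ i ∈ Icc 2 k, (1 - X ^ i) = ∏ i ∈ Icc 1 k, (1 - X ^ (n + i))) :
    (∀ d : ℕ, n * k + 1 < d → Q.coeff d = 0) ∧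
    (∀ d : ℕ, d ≤ n * k + 1 → Q.coeff d = -Q.coeff (n * k + 1 - d)) := by
  have hpos : ∀ i ∈ Icc 2 k, i ≠ 0 := fun i hi ↦ by grind
  obtain ⟨hdeg, hrefl⟩ := natDegree_le_and_reflect_eq_of_mul_prod_one_sub_X_pow_eq hpos
    (sum_Icc_one_add_eq n hk) hQ
  have hodd : Odd (#(Icc 2 k) + #(Icc 1 k)) := by
    simp only [Nat.card_Icc]
    grind
  rw [hodd.neg_one_pow, neg_one_mul] at hrefl
  refine ⟨fun d hd ↦ coeff_eq_zero_of_natDegree_lt (hdeg.trans_lt hd), fun d hd ↦ ?_⟩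
  rw [← revAt_le hd, ← coeff_reflect, hrefl, coeff_neg, neg_neg]

end

/-- Let `n ≥ 1`, `k ≥ 1`, and let `Q = Q_{n,k} ∈ ℚ[t]` be the quotient of
`∏_{i=1}^{k} (1 - t^{n+i})` by `∏_{i=2}^{k} (1 - t^i)`.  Then `Q` has degree at most `nk+1`
(its coefficients `q_d` vanish for `d > nk+1`) and its coefficients are antisymmetric with
respect to the degree: `q_d = -q_{nk+1-d}` for `0 ≤ d ≤ nk+1`. -/
theorem kloosterman_Q_antisymmetric (n k : ℕ) (hn : 1 ≤ n) (hk : 1 ≤ k) (Q : Polynomial ℚ)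
    (hQ : Q * ∏ i ∈ Finset.Icc 2 k, (1 - (Polynomial.X : Polynomial ℚ) ^ i) =
      ∏ i ∈ Finset.Icc 1 k, (1 - (Polynomial.X : Polynomial ℚ) ^ (n + i))) :
    (∀ d : ℕ, n * k + 1 < d → Q.coeff d = 0) ∧
    (∀ d : ℕ, d ≤ n * k + 1 → Q.coeff d = -Q.coeff (n * k + 1 - d)) := by
  exact kloosterman_Q_antisymmetric_general n k hk Q hQ
end

section
/- Let n ≥ 1 and k ≥ 1 be integers. For every d ∈ ℕ, the coefficient of t^d in Q_{n,k} equals r_{d,k} − r_{d−1,k} (as rational numbers, after casting the natural numbers r_{d,k} to ℚ). Equivalently, the generating identity (1−t)/((1−x)(1−t·x)⋯(1−t^n·x)) = Σ_{k≥0} Q_{n,k}(t)·x^k holds coefficientwise. -/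
/-!
The generating polynomial `∑_d r_{d,k} t^d` is the complete homogeneous symmetric polynomial `h_k`
evaluated at `(1, t, …, t^n)`. Splitting the monomials of `h_k` by whether they contain the first
variable, and using homogeneity to rescale `(t, …, t^n)` to `(1, …, t^(n-1))`, gives a `q`-Pascal
recurrence, whence
`h_k(1, t, …, t^n) * ∏_{i=1}^k (1 - t^i) = ∏_{i=1}^k (1 - t^(n+i))`.
The factors `1 - t^i` with `i ≥ 2` are regular, so cancelling them gives
`Q_{n,k} = (1 - t) * h_k(1, t, …, t^n)`, whose coefficients are `r_{d,k} - r_{d-1,k}`.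
-/

/-- `r_{d,k}`: the number of tuples `(I₀, …, I_n) ∈ ℕ^{n+1}` with `I₀ + ⋯ + I_n = k` and
`I₁ + 2I₂ + ⋯ + n·I_n = d`.  The index `d` ranges over `ℤ`, so that `r_{d,k} = 0` for `d < 0`. -/
noncomputable def kloostermanR (n k : ℕ) (d : ℤ) : ℕ :=
  Nat.card {I : Fin (n + 1) → ℕ //
    (∑ i, I i) = k ∧ ((∑ i : Fin (n + 1), (i : ℕ) * I i : ℕ) : ℤ) = d}

section Hsymm

open MvPolynomial

variable {σ τ R : Type*} [CommSemiring R] [Fintype σ] [DecidableEq σ] [Fintype τ] [DecidableEq τ]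

lemma eval_hsymm (f : σ → R) (k : ℕ) :
    eval f (hsymm σ R k) = ∑ s : Sym σ k, ((s : Multiset σ).map f).prod := by
  simp [hsymm, map_multiset_prod]

lemma eval_hsymm_eq_sum_piAntidiag (f : σ → R) (k : ℕ) :
    eval f (hsymm σ R k) = ∑ I ∈ Finset.univ.piAntidiag k, ∏ i, f i ^ I i := by
  have prod_map_eq_prod_pow_count (s : Sym σ k) :
      ((s : Multiset σ).map f).prod = ∏ i, f i ^ (s : Multiset σ).count i := by
    rw [Finset.prod_multiset_map_count]
    exact Finset.prod_subset (Finset.subset_univ _) (by simp +contextual)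
  simp [eval_hsymm, ← Finset.map_sym_eq_piAntidiag, prod_map_eq_prod_pow_count]

lemma eval_mul_hsymm (q : R) (f : σ → R) (k : ℕ) :
    eval (fun i ↦ q * f i) (hsymm σ R k) = q ^ k * eval f (hsymm σ R k) := by
  simp [eval_hsymm, Finset.mul_sum]

lemma eval_comp_equiv_hsymm (f : τ → R) (e : σ ≃ τ) (k : ℕ) :
    eval (f ∘ e) (hsymm σ R k) = eval f (hsymm τ R k) := by
  rw [← rename_hsymm σ R k e, eval_rename]

lemma eval_hsymm_option_succ (f : Option σ → R) (k : ℕ) :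
    eval f (hsymm (Option σ) R (k + 1)) =
      f none * eval f (hsymm (Option σ) R k) + eval (f ∘ some) (hsymm σ R (k + 1)) := by
  simp [eval_hsymm, ← symOptionSuccEquiv.symm.sum_comp, symOptionSuccEquiv, Finset.mul_sum,
    Function.comp_def, Sym.coe_cons]

lemma eval_hsymm_fin_succ {m : ℕ} (f : Fin (m + 1) → R) (k : ℕ) :
    eval f (hsymm (Fin (m + 1)) R (k + 1)) =
      f 0 * eval f (hsymm (Fin (m + 1)) R k) + eval (f ∘ Fin.succ) (hsymm (Fin m) R (k + 1)) := by
  simp [← eval_comp_equiv_hsymm f (finSuccEquiv m).symm, eval_hsymm_option_succ, Function.comp_def]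

end Hsymm

/-- The principal specialization `h_k(1, q, …, q^(m-1))` of the complete homogeneous symmetric
polynomial in `m` variables, i.e. the Gaussian binomial `[m + k - 1 choose k]_q`. For `m = n + 1`
and `q = X` it is the generating polynomial of `r_{d,k}` in `d`. -/
noncomputable def principalHsymm {R : Type*} [CommSemiring R] (m k : ℕ) (q : R) : R :=
  MvPolynomial.eval (fun i : Fin m ↦ q ^ (i : ℕ)) (MvPolynomial.hsymm (Fin m) R k)

section Recurrence

variable {R : Type*} [CommSemiring R]

lemma principalHsymm_zero_succ (k : ℕ) (q : R) : principalHsymm 0 (k + 1) q = 0 := by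
  simp [principalHsymm, eval_hsymm]

lemma principalHsymm_zero_right (m : ℕ) (q : R) : principalHsymm m 0 q = 1 := by
  simp [principalHsymm]

lemma principalHsymm_succ_succ (m k : ℕ) (q : R) :
    principalHsymm (m + 1) (k + 1) q =
      principalHsymm (m + 1) k q + q ^ (k + 1) * principalHsymm m (k + 1) q := by
  simp [principalHsymm, eval_hsymm_fin_succ, Function.comp_def, pow_succ', eval_mul_hsymm]

end Recurrence

section ProductFormula

variable {R : Type*} [CommRing R]

theorem principalHsymm_mul_prod (m k : ℕ) (q : R) :
    principalHsymm m k q * ∏ i ∈ Finset.Icc 1 k, (1 - q ^ i) =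
      ∏ i ∈ Finset.Ico m (m + k), (1 - q ^ i) := by
  induction m generalizing k with
  | zero =>
    cases k with
    | zero => simp [principalHsymm_zero_right]
    | succ k => simp [principalHsymm_zero_succ, Finset.prod_range_succ']
  | succ m ihm =>
    induction k with
    | zero => simp [principalHsymm_zero_right]
    | succ k ihk =>
      have h_bot : principalHsymm m (k + 1) q * ∏ i ∈ Finset.Icc 1 (k + 1), (1 - q ^ i) =
          (1 - q ^ m) * ∏ i ∈ Finset.Ico (m + 1) (m + 1 + k), (1 - q ^ i) := by
        rw [ihm, Finset.prod_eq_prod_Ico_succ_bot (by lia), Nat.add_right_comm m 1 k, ← add_assoc]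
      rw [Finset.prod_Icc_succ_top (by lia)] at h_bot ⊢
      rw [principalHsymm_succ_succ, ← add_assoc, Finset.prod_Ico_succ_top (by lia)]
      linear_combination (1 - q ^ (k + 1)) * ihk + q ^ (k + 1) * h_bot

theorem one_sub_mul_principalHsymm_mul_prod (n : ℕ) {k : ℕ} (hk : 1 ≤ k) (q : R) :
    (1 - q) * principalHsymm (n + 1) k q * ∏ i ∈ Finset.Icc 2 k, (1 - q ^ i) =
      ∏ i ∈ Finset.Icc 1 k, (1 - q ^ (n + i)) := by
  have split_bot : ∏ i ∈ Finset.Icc 1 k, (1 - q ^ i) =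
      (1 - q) * ∏ i ∈ Finset.Icc 2 k, (1 - q ^ i) := by
    rw [← Finset.mul_prod_Ioc_eq_prod_Icc hk, pow_one, ← Finset.Icc_add_one_left_eq_Ioc]
    rfl
  calc
    _ = principalHsymm (n + 1) k q * ∏ i ∈ Finset.Icc 1 k, (1 - q ^ i) := by
      rw [split_bot]
      ring
    _ = ∏ i ∈ Finset.Ico (1 + n) (k + 1 + n), (1 - q ^ i) := by
      rw [principalHsymm_mul_prod]
      congr 2 <;> lia
    _ = ∏ i ∈ Finset.Icc 1 k, (1 - q ^ (n + i)) := by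
      rw [← Finset.prod_Ico_add fun i ↦ 1 - q ^ i, Finset.Ico_add_one_right_eq_Icc]

end ProductFormula

section Coefficients

open Polynomial

lemma kloostermanR_of_neg (n k : ℕ) {d : ℤ} (hd : d < 0) : kloostermanR n k d = 0 := by
  have : IsEmpty {I : Fin (n + 1) → ℕ //
      (∑ i, I i) = k ∧ ((∑ i : Fin (n + 1), (i : ℕ) * I i : ℕ) : ℤ) = d} :=
    ⟨fun ⟨_, _, hI⟩ ↦ by lia⟩
  exact Nat.card_of_isEmpty

lemma kloostermanR_natCast_eq_card (n k d : ℕ) :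
    kloostermanR n k d =
      {I ∈ Finset.piAntidiag (Finset.univ : Finset (Fin (n + 1))) k |
        d = ∑ i : Fin (n + 1), (i : ℕ) * I i}.card := by
  rw [kloostermanR, Nat.subtype_card]
  intro I
  simp only [Finset.mem_filter, Finset.mem_piAntidiag, Finset.mem_univ, implies_true, and_true,
    Nat.cast_inj, eq_comm (a := d)]

lemma coeff_principalHsymm_X {R : Type*} [CommSemiring R] (n k d : ℕ) :
    (principalHsymm (n + 1) k (X : R[X])).coeff d = kloostermanR n k d := by
  simp [principalHsymm, eval_hsymm_eq_sum_piAntidiag, kloostermanR_natCast_eq_card, ← pow_mul,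
    Finset.prod_pow_eq_pow_sum, coeff_X_pow]

lemma coeff_X_mul_principalHsymm_X {R : Type*} [CommSemiring R] (n k d : ℕ) :
    (X * principalHsymm (n + 1) k (X : R[X])).coeff d = (kloostermanR n k ((d : ℤ) - 1) : R) := by
  cases d with
  | zero => simp [kloostermanR_of_neg]
  | succ d => simp [coeff_principalHsymm_X]

lemma isRegular_prod_one_sub_X_pow {R : Type*} [CommRing R] {s : Finset ℕ} (hs : 0 ∉ s) :
    IsRegular (∏ i ∈ s, (1 - (X : R[X]) ^ i)) := by
  refine IsRegular.prod fun i hi ↦ ?_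
  have hmonic : (X ^ i - 1 : R[X]).Monic := monic_X_pow_sub_C 1 (ne_of_mem_of_not_mem hi hs)
  simpa using isUnit_one.neg.isRegular.mul hmonic.isRegular

theorem kloosterman_Q_coeff_eq_r_sub_r_general {R : Type*} [CommRing R] (n k : ℕ) (hk : 1 ≤ k)
    (Q : R[X])
    (hQ : Q * ∏ i ∈ Finset.Icc 2 k, (1 - (X : R[X]) ^ i) =
      ∏ i ∈ Finset.Icc 1 k, (1 - (X : R[X]) ^ (n + i))) (d : ℕ) :
    Q.coeff d = (kloostermanR n k d : R) - (kloostermanR n k ((d : ℤ) - 1) : R) := by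
  have hQ_eq : Q = (1 - X) * principalHsymm (n + 1) k X :=
    (isRegular_prod_one_sub_X_pow (by simp)).right <|
      hQ.trans (one_sub_mul_principalHsymm_mul_prod n hk X).symm
  rw [hQ_eq, sub_mul, one_mul, coeff_sub, coeff_principalHsymm_X, coeff_X_mul_principalHsymm_X]

end Coefficients

/-- For `n ≥ 1`, `k ≥ 1`, and `Q = Q_{n,k}` the quotient of
`∏_{i=1}^{k}(1 - t^{n+i})` by `∏_{i=2}^{k}(1 - t^i)`, the coefficient of `t^d` in `Q`
equals `r_{d,k} - r_{d-1,k}` (as rational numbers). -/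
theorem kloosterman_Q_coeff_eq_r_sub_r (n k : ℕ) (hn : 1 ≤ n) (hk : 1 ≤ k) (Q : Polynomial ℚ)
    (hQ : Q * ∏ i ∈ Finset.Icc 2 k, (1 - (Polynomial.X : Polynomial ℚ) ^ i) =
      ∏ i ∈ Finset.Icc 1 k, (1 - (Polynomial.X : Polynomial ℚ) ^ (n + i))) :
    ∀ d : ℕ, Q.coeff d = (kloostermanR n k d : ℚ) - (kloostermanR n k ((d : ℤ) - 1) : ℚ) :=
  kloosterman_Q_coeff_eq_r_sub_r_general n k hk Q hQ
end

section
/- Let n ≥ 1 and k ≥ 1 be integers with gcd(k, n+1) = 1. Then for any two integers j₁ and j₂, the number of tuples (I₀, …, I_n) ∈ ℕ^{n+1} with I₀ + ⋯ + I_n = k and I₁ + 2I₂ + ⋯ + n·I_n ≡ j₁ (mod n+1) equals the number of such tuples with I₁ + 2I₂ + ⋯ + n·I_n ≡ j₂ (mod n+1). (Equivalently, the polynomial r_k(t) = Σ_d r_{d,k} t^d is divisible by 1 + t + ⋯ + t^n in ℚ[t], i.e. the formal power series h_k(t) = r_k(t)/(1 + t + ⋯ + t^n) is a polynomial.) -/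
/-!
Read the index set `{0, …, n}` as the cyclic group of order `n + 1`. Translating a tuple on a finite
commutative group by `c` preserves its sum `k` and adds `k • c` to its weight. When `k` is coprime
to the order of the group, every element is of the form `k • c`, so translations carry the tuples of
any given weight bijectively onto those of any other weight.
-/

/-- The weight `∑ g, I g • g` of a tuple of multiplicities `I` indexed by a finite commutative
monoid. On the cyclic group `Fin (n + 1)` it is the residue `I₁ + 2I₂ + ⋯ + n·I_n` modulo `n + 1`,
by `tupleWeight_eq_ofNat_iff`. -/
def tupleWeight {G : Type*} [AddCommMonoid G] [Fintype G] (I : G → ℕ) : G := ∑ g, I g • g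

section AddCommGroup

variable {G : Type*} [AddCommGroup G] [Fintype G]

lemma tupleWeight_comp_subRight (c : G) (I : G → ℕ) :
    tupleWeight (I ∘ Equiv.subRight c) = tupleWeight I + (∑ g, I g) • c :=
  calc
    ∑ g, I (g - c) • g = ∑ g, I g • (g + c) := by
      simpa only [Equiv.subRight_apply, sub_add_cancel] using
        Equiv.sum_comp (Equiv.subRight c) fun g => I g • (g + c)
    _ = ∑ g, I g • g + (∑ g, I g) • c := by
      simp only [smul_add, Finset.sum_add_distrib, Finset.sum_smul]

lemma card_tupleWeight_eq_add_nsmul (k : ℕ) (a c : G) :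
    Nat.card {I : G → ℕ // ∑ g, I g = k ∧ tupleWeight I = a} =
      Nat.card {I : G → ℕ // ∑ g, I g = k ∧ tupleWeight I = a + k • c} := by
  refine Nat.card_congr
    (((Equiv.subRight c).symm.arrowCongr (Equiv.refl ℕ)).subtypeEquiv fun I => ?_)
  change _ ↔ ∑ g, I (Equiv.subRight c g) = k ∧ tupleWeight (I ∘ Equiv.subRight c) = a + k • c
  rw [Equiv.sum_comp, tupleWeight_comp_subRight]
  refine and_congr_right fun hsum => ?_
  rw [hsum, add_left_inj]

theorem kloosterman_count_equidistributed_mod_general {k : ℕ}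
    (hk : k.Coprime (Nat.card G)) (a b : G) :
    Nat.card {I : G → ℕ // ∑ g, I g = k ∧ tupleWeight I = a} =
      Nat.card {I : G → ℕ // ∑ g, I g = k ∧ tupleWeight I = b} := by
  obtain ⟨c, hc : k • c = b - a⟩ := (nsmulCoprime hk.symm).surjective (b - a)
  simpa only [hc, add_sub_cancel] using card_tupleWeight_eq_add_nsmul k a c

end AddCommGroup

open Fin.NatCast Fin.CommRing in
lemma tupleWeight_eq_ofNat_iff {n : ℕ} [NeZero n] (I : Fin n → ℕ) (j : ℕ) :
    tupleWeight I = Fin.ofNat n j ↔ (∑ i : Fin n, (i : ℕ) * I i) % n = j % n := by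
  have hcast : tupleWeight I = ((∑ i : Fin n, (i : ℕ) * I i : ℕ) : Fin n) := by
    simp only [tupleWeight, Nat.cast_sum, Nat.cast_mul, Fin.cast_val_eq_self, nsmul_eq_mul,
      mul_comm]
  rw [hcast, Fin.ext_iff, Fin.val_natCast, Fin.val_ofNat]

/-- Let `n ≥ 1`, `k ≥ 1` with `gcd(k, n+1) = 1`.  For any integers `j₁, j₂`,
the number of tuples `(I₀, …, I_n) ∈ ℕ^{n+1}` with `I₀ + ⋯ + I_n = k` and
`I₁ + 2I₂ + ⋯ + n·I_n ≡ j₁ (mod n+1)` equals the number of such tuples with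
`I₁ + 2I₂ + ⋯ + n·I_n ≡ j₂ (mod n+1)`. -/
theorem kloosterman_count_equidistributed_mod (n k : ℕ) (hn : 1 ≤ n) (hk : 1 ≤ k)
    (hgcd : Nat.gcd k (n + 1) = 1) :
    ∀ j₁ j₂ : ℕ,
      Nat.card {I : Fin (n + 1) → ℕ //
        (∑ i, I i) = k ∧ (∑ i : Fin (n + 1), (i : ℕ) * I i) % (n + 1) = j₁ % (n + 1)} =
      Nat.card {I : Fin (n + 1) → ℕ //
        (∑ i, I i) = k ∧ (∑ i : Fin (n + 1), (i : ℕ) * I i) % (n + 1) = j₂ % (n + 1)} := by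
  intro j₁ j₂
  simpa only [tupleWeight_eq_ofNat_iff] using kloosterman_count_equidistributed_mod_general
    (by rwa [Nat.card_fin]) (Fin.ofNat (n + 1) j₁) (Fin.ofNat (n + 1) j₂)
end

section
/- Let k ≥ 1 and let 0 ≤ d ≤ k be integers. In the case n = 2, define N_{d,k} as the number of tuples (a, I₀, I₁, I₂) ∈ ℕ⁴ with I₀ + I₁ + I₂ = k and 3a + I₁ + 2I₂ = d (with N_{d,k} = 0 for d < 0). Then n_{d,k} := N_{d,k} − N_{d−1,k} equals ⌊d/6⌋ if d ≡ 1 (mod 6), and equals ⌊d/6⌋ + 1 otherwise. -/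
/-- In the case `n = 2`: `N_{d,k}` is the number of tuples `(a, I₀, I₁, I₂) ∈ ℕ⁴` with
`I₀ + I₁ + I₂ = k` and `3a + I₁ + 2I₂ = d`.  The index `d` ranges over `ℤ`, so that
`N_{d,k} = 0` for `d < 0`. -/
noncomputable def kloostermanN₂ (k : ℕ) (d : ℤ) : ℕ :=
  Nat.card {p : ℕ × ℕ × ℕ × ℕ //
    p.2.1 + p.2.2.1 + p.2.2.2 = k ∧
    ((3 * p.1 + p.2.2.1 + 2 * p.2.2.2 : ℕ) : ℤ) = d}

/-!
When `d ≤ k`, a tuple counted by `N_{d,k}` is determined by `(a, I₂)`, which can be any pair with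
`3a + 2I₂ ≤ d`: the weight condition gives `I₁`, and then `I₁ + I₂ ≤ d ≤ k` leaves room for `I₀`.
Hence `N_{d,k} - N_{d-1,k}` is the number of pairs with `3a + 2I₂ = d`.  In such a pair `a` has the
parity of `d`, so the pairs are parametrized by `a = d % 2 + 2j` with `3 (d % 2) + 6j ≤ d`.
-/

lemma ncard_setOf_le_sub_ncard_setOf_le_sub_one {α : Type*} (f : α → ℤ) (d : ℤ)
    (hfin : {x | f x ≤ d}.Finite) :
    ({x | f x ≤ d}.ncard : ℤ) - {x | f x ≤ d - 1}.ncard = {x | f x = d}.ncard := by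
  have hsub : {x | f x ≤ d - 1} ⊆ {x | f x ≤ d} := fun x (hx : f x ≤ d - 1) ↦
    show f x ≤ d by omega
  have hdiff : {x | f x ≤ d} \ {x | f x ≤ d - 1} = {x | f x = d} := by
    ext x
    simp only [Set.mem_sdiff, Set.mem_ofPred_eq]
    omega
  rw [← hdiff, ← Set.ncard_sdiff_add_ncard_of_subset hsub hfin]
  push_cast
  ring

lemma finite_setOf_mul_add_mul_le {m n : ℕ} (hm : 0 < m) (hn : 0 < n) (d : ℤ) :
    {q : ℕ × ℕ | ((m * q.1 + n * q.2 : ℕ) : ℤ) ≤ d}.Finite := by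
  refine (Set.finite_Iic (d.toNat, d.toNat)).subset fun q (hq : _ ≤ d) ↦ ?_
  have hfst : q.1 ≤ m * q.1 := Nat.le_mul_of_pos_left _ hm
  have hsnd : q.2 ≤ n * q.2 := Nat.le_mul_of_pos_left _ hn
  exact Prod.mk_le_mk.2 ⟨by omega, by omega⟩

lemma kloostermanN₂_eq_ncard_le {k : ℕ} {d : ℤ} (hd : d ≤ k) :
    kloostermanN₂ k d = {q : ℕ × ℕ | ((3 * q.1 + 2 * q.2 : ℕ) : ℤ) ≤ d}.ncard :=
  Nat.card_congr
    { toFun p := ⟨(p.1.1, p.1.2.2.2), by have := p.2; simp only [Set.mem_ofPred_eq]; omega⟩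
      invFun q :=
        let I₁ := (d - (3 * q.1.1 + 2 * q.1.2 : ℕ)).toNat
        ⟨(q.1.1, k - I₁ - q.1.2, I₁, q.1.2), by
          have : ((3 * q.1.1 + 2 * q.1.2 : ℕ) : ℤ) ≤ d := q.2
          dsimp only
          omega⟩
      left_inv := by
        rintro ⟨⟨a, I₀, I₁, I₂⟩, hsum, hweight⟩
        simp only [Subtype.mk.injEq, Prod.mk.injEq, true_and, and_true] at hsum hweight ⊢
        omega
      right_inv _ := rfl }

lemma kloostermanN₂_sub_kloostermanN₂_sub_one {k : ℕ} {d : ℤ} (hd : d ≤ k) :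
    (kloostermanN₂ k d : ℤ) - kloostermanN₂ k (d - 1) =
      {q : ℕ × ℕ | ((3 * q.1 + 2 * q.2 : ℕ) : ℤ) = d}.ncard := by
  rw [kloostermanN₂_eq_ncard_le hd, kloostermanN₂_eq_ncard_le (by omega : d - 1 ≤ k)]
  exact ncard_setOf_le_sub_ncard_setOf_le_sub_one _ d
    (finite_setOf_mul_add_mul_le three_pos two_pos d)

lemma ncard_three_mul_add_two_mul_eq (d : ℕ) :
    {q : ℕ × ℕ | 3 * q.1 + 2 * q.2 = d}.ncard = if d % 6 = 1 then d / 6 else d / 6 + 1 := by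
  let pair (j : ℕ) : ℕ × ℕ := (d % 2 + 2 * j, (d - 3 * (d % 2)) / 2 - 3 * j)
  have pair_injective : pair.Injective := fun i j hij ↦ by
    have : d % 2 + 2 * i = d % 2 + 2 * j := congrArg Prod.fst hij
    omega
  have setOf_eq_image : {q : ℕ × ℕ | 3 * q.1 + 2 * q.2 = d} =
      pair '' {j | 3 * (d % 2) + 6 * j ≤ d} := by
    ext ⟨a, c⟩
    simp only [pair, Set.mem_image, Set.mem_ofPred_eq, Prod.mk.injEq]
    refine ⟨fun h ↦ ⟨a / 2, ?_⟩, fun ⟨j, h⟩ ↦ by omega⟩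
    have parity : a % 2 = d % 2 := by omega
    omega
  have setOf_eq_range : {j | 3 * (d % 2) + 6 * j ≤ d} =
      (Finset.range (if d % 6 = 1 then d / 6 else d / 6 + 1) : Set ℕ) := by
    ext j
    simp only [Set.mem_ofPred_eq, Finset.coe_range, Set.mem_Iio]
    split_ifs <;> omega
  rw [setOf_eq_image, Set.ncard_image_of_injective _ pair_injective, setOf_eq_range,
    Set.ncard_coe_finset, Finset.card_range]

/-- For `k ≥ 1` and `0 ≤ d ≤ k`, in the case `n = 2` one has
`n_{d,k} := N_{d,k} - N_{d-1,k} = ⌊d/6⌋` if `d ≡ 1 (mod 6)` and `⌊d/6⌋ + 1` otherwise. -/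
theorem kloosterman_n_formula_n_two (k : ℕ) (hk : 1 ≤ k) (d : ℕ) (hd : d ≤ k) :
    (kloostermanN₂ k d : ℤ) - kloostermanN₂ k ((d : ℤ) - 1) =
      if d % 6 = 1 then ((d / 6 : ℕ) : ℤ) else ((d / 6 : ℕ) : ℤ) + 1 := by
  rw [kloostermanN₂_sub_kloostermanN₂_sub_one (Int.ofNat_le.2 hd)]
  simp only [Nat.cast_inj, ncard_three_mul_add_two_mul_eq]
  push_cast
  rfl
end

section
/- Let n ≥ 1 and k ≥ 1 be integers, and fix a primitive (n+1)-th root of unity ζ ∈ ℂ. The map D : P_k → P_k is injective if and only if there is no tuple I = (I₀, …, I_n) ∈ ℕ^{n+1} with I₀ + ⋯ + I_n = k and Σ_{i=0}^{n} I_i·ζ^i = 0. In particular, if n+1 is a prime number, then D is injective on P_k if and only if (n+1) does not divide k. -/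
/-!
The derivation `D` extends the linear map of `x₀, …, x_n` whose matrix is the companion matrix of
`λ^(n+1) - z`. Over an algebraically closed field that contains `ℂ[z]`, where `z = t^(n+1)`, this
matrix has the distinct eigenvalues `ζ^j t`, and a Vandermonde matrix diagonalizes it. In the
eigencoordinates `y_j`, the monomial `y^I` is an eigenvector of `D` with eigenvalue
`t · ∑ I_j ζ^j`, so `D` has a kernel in degree `k` exactly when one of these scalars with
`∑ I_j = k` vanishes. The extension of scalars is harmless because the injectivity of `D` in degree
`k` is the nonvanishing of a determinant.

For `n + 1` prime, a relation `∑ I_j ζ^j = 0` makes `∑ I_j X^j` a multiple of the cyclotomic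
polynomial, whose value at `1` is `n + 1`; conversely `∑ ζ^j = 0`.
-/

open MvPolynomial

/-- The `ℂ[z]`-linear derivation `D` on `ℂ[z][x₀, …, x_n]` with `D(x_i) = x_{i+1}` for
`0 ≤ i ≤ n-1` and `D(x_n) = z·x₀`. -/
noncomputable def kloostermanD (n : ℕ) :
    Derivation (Polynomial ℂ) (MvPolynomial (Fin (n + 1)) (Polynomial ℂ))
      (MvPolynomial (Fin (n + 1)) (Polynomial ℂ)) :=
  MvPolynomial.mkDerivation (Polynomial ℂ) fun i =>
    if h : (i : ℕ) + 1 < n + 1 then MvPolynomial.X ⟨(i : ℕ) + 1, h⟩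
    else MvPolynomial.C Polynomial.X * MvPolynomial.X 0

section Derivation

variable {σ R : Type*} [CommSemiring R]

lemma ringHom_derivation_comm {τ S : Type*} [CommSemiring S]
    (h : MvPolynomial σ R →+* MvPolynomial τ S)
    (D : Derivation R (MvPolynomial σ R) (MvPolynomial σ R))
    (E : Derivation S (MvPolynomial τ S) (MvPolynomial τ S))
    (hC : ∀ a, E (h (C a)) = 0) (hX : ∀ i, h (D (X i)) = E (h (X i)))
    (p : MvPolynomial σ R) : h (D p) = E (h p) := by
  induction p using MvPolynomial.induction_on with
  | C a => rw [derivation_C, map_zero, hC]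
  | add p q hp hq => simp only [map_add, hp, hq]
  | mul_X p i hp => simp only [Derivation.leibniz, map_mul, map_add, smul_eq_mul, hp, hX]

lemma derivation_apply_eq_sum_pderiv [Fintype σ]
    (D : Derivation R (MvPolynomial σ R) (MvPolynomial σ R)) (p : MvPolynomial σ R) :
    D p = ∑ i, D (X i) * pderiv i p := by
  classical
  induction p using MvPolynomial.induction_on with
  | C a => simp
  | add p q hp hq => simp only [map_add, hp, hq, mul_add, Finset.sum_add_distrib]
  | mul_X p i hp =>
    simp [hp, pderiv_X, Pi.single_apply, mul_add, Finset.sum_add_distrib, Finset.mul_sum,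
      mul_comm, mul_left_comm]

end Derivation

lemma isHomogeneous_ext {σ R : Type*} [CommSemiring R] {k : ℕ} {p q : MvPolynomial σ R}
    (hp : p.IsHomogeneous k) (hq : q.IsHomogeneous k)
    (h : ∀ s : {s : σ →₀ ℕ // s.degree = k}, coeff s.1 p = coeff s.1 q) : p = q := by
  ext s
  by_cases hs : s.degree = k
  · exact h ⟨s, hs⟩
  · rw [hp.coeff_eq_zero hs, hq.coeff_eq_zero hs]

section HomogeneousDeterminant

variable {σ R : Type*} [Finite σ] [CommRing R] {k : ℕ}

noncomputable local instance : Fintype {s : σ →₀ ℕ // s.degree = k} :=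
  (Finsupp.finite_of_degree_eq k).fintype

/-- The matrix, in the basis of monomials, of the action of a degree-preserving linear map on the
forms of degree `k`. -/
noncomputable def homogeneousMatrix (k : ℕ) (T : MvPolynomial σ R →ₗ[R] MvPolynomial σ R) :
    Matrix {s : σ →₀ ℕ // s.degree = k} {s : σ →₀ ℕ // s.degree = k} R :=
  .of fun s t => coeff s.1 (T (monomial t.1 1))

lemma coeff_sum_monomial_degree_eq (v : {s : σ →₀ ℕ // s.degree = k} → R)
    (s : {s : σ →₀ ℕ // s.degree = k}) : coeff s.1 (∑ t, monomial t.1 (v t)) = v s := by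
  classical
  simp [coeff_sum, coeff_monomial, ← Subtype.ext_iff]

lemma isHomogeneous_sum_monomial_degree_eq (v : {s : σ →₀ ℕ // s.degree = k} → R) :
    (∑ t, monomial t.1 (v t)).IsHomogeneous k :=
  IsHomogeneous.sum _ _ _ fun s _ => isHomogeneous_monomial _ s.2

lemma coeff_linearMap_sum_monomial (T : MvPolynomial σ R →ₗ[R] MvPolynomial σ R)
    (v : {s : σ →₀ ℕ // s.degree = k} → R) (s : {s : σ →₀ ℕ // s.degree = k}) :
    coeff s.1 (T (∑ t, monomial t.1 (v t))) = (homogeneousMatrix k T).mulVec v s := by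
  have hmon : ∀ t : {s : σ →₀ ℕ // s.degree = k}, monomial t.1 (v t) = v t • monomial t.1 1 :=
    fun t => by rw [smul_monomial, smul_eq_mul, mul_one]
  simp only [hmon, map_sum, map_smul, coeff_sum, coeff_smul, smul_eq_mul, Matrix.mulVec,
    dotProduct, homogeneousMatrix, Matrix.of_apply, mul_comm]

lemma injOn_homogeneousSubmodule_iff_det_ne_zero [DecidableEq σ] [IsDomain R]
    {T : MvPolynomial σ R →ₗ[R] MvPolynomial σ R}
    (hT : ∀ p : MvPolynomial σ R, p.IsHomogeneous k → (T p).IsHomogeneous k) :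
    Set.InjOn T (homogeneousSubmodule σ R k) ↔ (homogeneousMatrix k T).det ≠ 0 := by
  rw [Set.injOn_iff_map_eq_zero]
  constructor
  · intro h hdet
    obtain ⟨v, hv, hTv⟩ := Matrix.exists_mulVec_eq_zero_iff.mpr hdet
    have hhom := isHomogeneous_sum_monomial_degree_eq v
    have hker : T (∑ t, monomial t.1 (v t)) = 0 :=
      isHomogeneous_ext (hT _ hhom) (isHomogeneous_zero _ _ _) fun s => by
        rw [coeff_linearMap_sum_monomial, hTv, Pi.zero_apply, coeff_zero]
    refine hv (funext fun s => ?_)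
    rw [← coeff_sum_monomial_degree_eq v s, h _ hhom hker, coeff_zero, Pi.zero_apply]
  · intro hdet p hp hTp
    set v : {s : σ →₀ ℕ // s.degree = k} → R := fun s => coeff s.1 p
    have hpv : p = ∑ t, monomial t.1 (v t) :=
      isHomogeneous_ext hp (isHomogeneous_sum_monomial_degree_eq v) fun s =>
        (coeff_sum_monomial_degree_eq v s).symm
    have hv : v = 0 := Matrix.eq_zero_of_mulVec_eq_zero hdet <| funext fun s => by
      rw [← coeff_linearMap_sum_monomial, ← hpv, hTp, coeff_zero, Pi.zero_apply]
    simp [hpv, hv]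

lemma injOn_homogeneousSubmodule_iff_of_map [IsDomain R] {S : Type*} [CommRing S] [IsDomain S]
    {φ : R →+* S} (hφ : Function.Injective φ) {T : MvPolynomial σ R →ₗ[R] MvPolynomial σ R}
    {U : MvPolynomial σ S →ₗ[S] MvPolynomial σ S}
    (hT : ∀ p : MvPolynomial σ R, p.IsHomogeneous k → (T p).IsHomogeneous k)
    (hU : ∀ p : MvPolynomial σ S, p.IsHomogeneous k → (U p).IsHomogeneous k)
    (hTU : ∀ p, map φ (T p) = U (map φ p)) :
    Set.InjOn T (homogeneousSubmodule σ R k) ↔ Set.InjOn U (homogeneousSubmodule σ S k) := by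
  classical
  have hmatrix : homogeneousMatrix k U = φ.mapMatrix (homogeneousMatrix k T) := by
    ext s t
    simp [homogeneousMatrix, ← coeff_map, hTU]
  rw [injOn_homogeneousSubmodule_iff_det_ne_zero hT, injOn_homogeneousSubmodule_iff_det_ne_zero hU,
    hmatrix, ← RingHom.map_det, map_ne_zero_iff φ hφ]

end HomogeneousDeterminant

section LinearDerivation

variable {σ R S : Type*} [Fintype σ] [CommSemiring R] [CommSemiring S]

/-- The derivation `x_i ↦ ∑ j, M i j * x_j` of the polynomial ring: it acts on the forms of degree
`k` as the `k`-th symmetric power, in the sense of Lie algebras, of the linear map that sends `x_i`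
to the `i`-th row of `M`. -/
noncomputable def linearDerivation (M : Matrix σ σ R) :
    Derivation R (MvPolynomial σ R) (MvPolynomial σ R) :=
  mkDerivation R M.toMvPolynomial

lemma linearDerivation_X (M : Matrix σ σ R) (i : σ) :
    linearDerivation M (X i) = M.toMvPolynomial i :=
  mkDerivation_X _ _ _

lemma isHomogeneous_linearDerivation (M : Matrix σ σ R) {k : ℕ} {p : MvPolynomial σ R}
    (hp : p.IsHomogeneous k) : (linearDerivation M p).IsHomogeneous k := by
  cases k with
  | zero =>
    rw [← totalDegree_zero_iff_isHomogeneous, totalDegree_eq_zero_iff_eq_C] at hp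
    rw [hp, derivation_C]
    exact isHomogeneous_zero _ _ _
  | succ k =>
    rw [derivation_apply_eq_sum_pderiv, add_comm]
    refine IsHomogeneous.sum _ _ _ fun i _ => ?_
    rw [linearDerivation_X]
    exact (M.toMvPolynomial_isHomogeneous i).mul hp.pderiv

lemma map_linearDerivation (φ : R →+* S) (M : Matrix σ σ R) (p : MvPolynomial σ R) :
    map φ (linearDerivation M p) = linearDerivation (M.map φ) (map φ p) :=
  ringHom_derivation_comm (map φ) _ _ (fun a => by rw [map_C, derivation_C])
    (fun i => by rw [map_X, linearDerivation_X, linearDerivation_X, Matrix.toMvPolynomial_map]) p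

lemma linearDerivation_toMvPolynomial (M P : Matrix σ σ R) (i : σ) :
    linearDerivation M (P.toMvPolynomial i) = (P * M).toMvPolynomial i := by
  rw [Matrix.toMvPolynomial_mul]
  simp only [Matrix.toMvPolynomial, ← C_mul_X_eq_monomial, map_sum, ← smul_eq_C_mul,
    Derivation.map_smul, map_smul, linearDerivation_X, bind₁_X_right]

lemma bind₁_linearDerivation {M N P : Matrix σ σ R} (h : M * P = P * N) (p : MvPolynomial σ R) :
    bind₁ P.toMvPolynomial (linearDerivation M p) =
      linearDerivation N (bind₁ P.toMvPolynomial p) :=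
  ringHom_derivation_comm (bind₁ P.toMvPolynomial : MvPolynomial σ R →+* MvPolynomial σ R) _ _
    (fun a => by rw [RingHom.coe_coe, bind₁_C_right, derivation_C])
    (fun i => by
      rw [RingHom.coe_coe, linearDerivation_X, bind₁_X_right, linearDerivation_toMvPolynomial,
        ← Matrix.toMvPolynomial_mul, h]) p

lemma isHomogeneous_bind₁_toMvPolynomial (P : Matrix σ σ R) {k : ℕ} {p : MvPolynomial σ R}
    (hp : p.IsHomogeneous k) :
    (bind₁ P.toMvPolynomial p).IsHomogeneous k := by
  simpa using hp.aeval _ P.toMvPolynomial_isHomogeneous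

end LinearDerivation

lemma injOn_linearDerivation_map_iff {σ R S : Type*} [Fintype σ] [CommRing R] [IsDomain R]
    [CommRing S] [IsDomain S] {φ : R →+* S} (hφ : Function.Injective φ) (M : Matrix σ σ R) (k : ℕ) :
    Set.InjOn (linearDerivation (M.map φ)) (homogeneousSubmodule σ S k) ↔
      Set.InjOn (linearDerivation M) (homogeneousSubmodule σ R k) :=
  (injOn_homogeneousSubmodule_iff_of_map hφ (T := (linearDerivation M).toLinearMap)
    (U := (linearDerivation (M.map φ)).toLinearMap)
    (fun _ => isHomogeneous_linearDerivation M) (fun _ => isHomogeneous_linearDerivation _)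
    (map_linearDerivation φ M)).symm

section Conjugation

variable {σ R : Type*} [Fintype σ] [DecidableEq σ] [CommRing R] {M N P : Matrix σ σ R} {k : ℕ}

lemma bind₁_toMvPolynomial_injective (hP : IsUnit P.det) :
    Function.Injective (bind₁ P.toMvPolynomial) :=
  Function.LeftInverse.injective (g := bind₁ P⁻¹.toMvPolynomial) fun p => by
    rw [bind₁_bind₁]
    simp only [← Matrix.toMvPolynomial_mul, Matrix.mul_nonsing_inv P hP,
      Matrix.toMvPolynomial_one, bind₁_X_left, AlgHom.id_apply]

lemma injOn_linearDerivation_of_mul_eq_mul (hP : IsUnit P.det) (h : M * P = P * N)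
    (hN : Set.InjOn (linearDerivation N) (homogeneousSubmodule σ R k)) :
    Set.InjOn (linearDerivation M) (homogeneousSubmodule σ R k) := by
  intro p hp q hq hpq
  apply bind₁_toMvPolynomial_injective hP
  apply hN (isHomogeneous_bind₁_toMvPolynomial P hp) (isHomogeneous_bind₁_toMvPolynomial P hq)
  rw [← bind₁_linearDerivation h, ← bind₁_linearDerivation h, hpq]

lemma injOn_linearDerivation_iff_of_mul_eq_mul (hP : IsUnit P.det) (h : M * P = P * N) :
    Set.InjOn (linearDerivation M) (homogeneousSubmodule σ R k) ↔
      Set.InjOn (linearDerivation N) (homogeneousSubmodule σ R k) := by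
  refine ⟨injOn_linearDerivation_of_mul_eq_mul (P.isUnit_nonsing_inv_det hP) ?_,
    injOn_linearDerivation_of_mul_eq_mul hP h⟩
  rw [← Matrix.nonsing_inv_mul_cancel_left P N hP, ← h, Matrix.mul_assoc, Matrix.mul_assoc,
    Matrix.mul_nonsing_inv P hP, Matrix.mul_one]

end Conjugation

section Diagonal

variable {σ R : Type*} [Fintype σ] [DecidableEq σ] [CommSemiring R]

lemma toMvPolynomial_diagonal (v : σ → R) (i : σ) :
    (Matrix.diagonal v).toMvPolynomial i = C (v i) * X i := by
  rw [Matrix.toMvPolynomial, Finset.sum_eq_single i]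
  · rw [Matrix.diagonal_apply_eq, C_mul_X_eq_monomial]
  · intro j _ hj
    rw [Matrix.diagonal_apply_ne' v hj, map_zero]
  · simp

lemma linearDerivation_diagonal_monomial (v : σ → R) (s : σ →₀ ℕ) (a : R) :
    linearDerivation (Matrix.diagonal v) (monomial s a) =
      (∑ i, (s i : R) * v i) • monomial s a := by
  rw [derivation_apply_eq_sum_pderiv, Finset.sum_smul]
  refine Finset.sum_congr rfl fun i _ => ?_
  rw [linearDerivation_X, toMvPolynomial_diagonal, mul_assoc, X_mul_pderiv_monomial,
    ← smul_eq_C_mul, mul_comm, mul_smul, Nat.cast_smul_eq_nsmul]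

lemma coeff_linearDerivation_diagonal (v : σ → R) (p : MvPolynomial σ R) (s : σ →₀ ℕ) :
    coeff s (linearDerivation (Matrix.diagonal v) p) = (∑ i, (s i : R) * v i) * coeff s p := by
  induction p using MvPolynomial.induction_on' with
  | monomial t a =>
    rw [linearDerivation_diagonal_monomial, coeff_smul, smul_eq_mul, coeff_monomial]
    split_ifs with hts
    · rw [hts]
    · rw [mul_zero, mul_zero]
  | add p q hp hq => rw [map_add, coeff_add, coeff_add, hp, hq, mul_add]

lemma injOn_linearDerivation_diagonal_iff {R : Type*} [CommRing R] [IsDomain R] (v : σ → R)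
    (k : ℕ) :
    Set.InjOn (linearDerivation (Matrix.diagonal v)) (homogeneousSubmodule σ R k) ↔
      ¬∃ I : σ → ℕ, ∑ i, I i = k ∧ ∑ i, (I i : R) * v i = 0 := by
  rw [Set.injOn_iff_map_eq_zero]
  constructor
  · rintro h ⟨I, hI, hv⟩
    set s : σ →₀ ℕ := Finsupp.equivFunOnFinite.symm I
    have hs : (monomial s (1 : R)).IsHomogeneous k :=
      isHomogeneous_monomial _ (by rw [Finsupp.degree_eq_sum, ← hI]; rfl)
    have hker : linearDerivation (Matrix.diagonal v) (monomial s 1) = 0 := by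
      rw [linearDerivation_diagonal_monomial]
      exact (congrArg (· • monomial s (1 : R)) hv).trans (zero_smul _ _)
    exact one_ne_zero (monomial_eq_zero.mp (h _ hs hker))
  · intro h p hp hDp
    refine isHomogeneous_ext hp (isHomogeneous_zero _ _ _) fun s => ?_
    have hcoeff : (∑ i, (s.1 i : R) * v i) * coeff s.1 p = 0 := by
      rw [← coeff_linearDerivation_diagonal, hDp, coeff_zero]
    exact (mul_eq_zero.mp hcoeff).resolve_left fun hv =>
      h ⟨s.1, (Finsupp.degree_eq_sum _).symm.trans s.2, hv⟩

end Diagonal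

section CyclicShift

variable {R : Type*} [CommSemiring R] {n : ℕ}

/-- The companion matrix of `λ ^ (n + 1) - a`, with the convention that row `i` is the image of the
`i`-th basis vector: `e_i ↦ e_{i+1}` for `i < n` and `e_n ↦ a • e_0`. -/
def cyclicShiftMatrix (n : ℕ) (a : R) : Matrix (Fin (n + 1)) (Fin (n + 1)) R :=
  .of fun i => if h : (i : ℕ) + 1 < n + 1 then Pi.single ⟨(i : ℕ) + 1, h⟩ 1 else Pi.single 0 a

lemma cyclicShiftMatrix_map {S : Type*} [CommSemiring S] (φ : R →+* S) (a : R) :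
    (cyclicShiftMatrix n a).map φ = cyclicShiftMatrix n (φ a) := by
  ext i j
  simp only [cyclicShiftMatrix, Matrix.map_apply, Matrix.of_apply]
  split_ifs <;> simp [Pi.single_apply, apply_ite φ]

lemma cyclicShiftMatrix_mul_vandermonde_transpose {R : Type*} [CommRing R] {a : R}
    {v : Fin (n + 1) → R} (hv : ∀ j, v j ^ (n + 1) = a) :
    cyclicShiftMatrix n a * (Matrix.vandermonde v).transpose =
      (Matrix.vandermonde v).transpose * Matrix.diagonal v := by
  ext i j
  rw [Matrix.mul_diagonal, Matrix.transpose_apply, Matrix.vandermonde_apply, ← pow_succ]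
  simp only [cyclicShiftMatrix, Matrix.mul_apply, Matrix.of_apply, Matrix.transpose_apply,
    Matrix.vandermonde_apply]
  split_ifs with hi
  · simp [Pi.single_apply]
  · have hin : (i : ℕ) + 1 = n + 1 := by omega
    simp [Pi.single_apply, hin, hv]

lemma injOn_linearDerivation_cyclicShiftMatrix_iff {L : Type*} [Field L] {a : L}
    {v : Fin (n + 1) → L} (hinj : Function.Injective v) (hv : ∀ j, v j ^ (n + 1) = a) (k : ℕ) :
    Set.InjOn (linearDerivation (cyclicShiftMatrix n a)) (homogeneousSubmodule (Fin (n + 1)) L k) ↔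
      ¬∃ I : Fin (n + 1) → ℕ, ∑ i, I i = k ∧ ∑ i, (I i : L) * v i = 0 := by
  have hdet : IsUnit (Matrix.vandermonde v).transpose.det := by
    rw [Matrix.det_transpose, isUnit_iff_ne_zero]
    exact Matrix.det_vandermonde_ne_zero_iff.mpr hinj
  rw [injOn_linearDerivation_iff_of_mul_eq_mul hdet
    (cyclicShiftMatrix_mul_vandermonde_transpose hv), injOn_linearDerivation_diagonal_iff]

lemma kloostermanD_eq_linearDerivation (n : ℕ) :
    kloostermanD n = linearDerivation (cyclicShiftMatrix n Polynomial.X) := by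
  refine derivation_ext fun i => ?_
  rw [kloostermanD, mkDerivation_X, linearDerivation_X, Matrix.toMvPolynomial,
    cyclicShiftMatrix]
  simp only [Matrix.of_apply]
  split_ifs <;> simp [Pi.single_apply, ← C_mul_X_eq_monomial, apply_ite C]

end CyclicShift

section RootsOfUnity

variable {K : Type*} [Field K] {n k : ℕ} {ζ : K}

lemma injective_primitiveRoot_pow_mul {R : Type*} [CommRing R] [IsDomain R] {ξ t : R}
    (hξ : IsPrimitiveRoot ξ (n + 1)) (ht : t ≠ 0) :
    Function.Injective fun j : Fin (n + 1) => ξ ^ (j : ℕ) * t := fun i j hij =>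
  Fin.ext (hξ.pow_inj i.2 j.2 (mul_right_cancel₀ ht hij))

lemma injOn_linearDerivation_cyclicShiftMatrix_iff_of_isPrimitiveRoot {A : Type*} [CommRing A]
    [IsDomain A] [Algebra K A] {a : A} (ha : a ≠ 0) (hζ : IsPrimitiveRoot ζ (n + 1)) (k : ℕ) :
    Set.InjOn (linearDerivation (cyclicShiftMatrix n a)) (homogeneousSubmodule (Fin (n + 1)) A k) ↔
      ¬∃ I : Fin (n + 1) → ℕ, ∑ i, I i = k ∧ ∑ i, (I i : K) * ζ ^ (i : ℕ) = 0 := by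
  let L := AlgebraicClosure (FractionRing A)
  let φ : A →+* L := (algebraMap (FractionRing A) L).comp (algebraMap A (FractionRing A))
  have hφ : Function.Injective φ :=
    (algebraMap (FractionRing A) L).injective.comp (IsFractionRing.injective A (FractionRing A))
  let ψ : K →+* L := φ.comp (algebraMap K A)
  obtain ⟨t, ht⟩ := IsAlgClosed.exists_pow_nat_eq (φ a) n.succ_pos
  have ht0 : t ≠ 0 := by
    rintro rfl
    exact ha (hφ (by rw [← ht, zero_pow n.succ_ne_zero, map_zero]))
  have hψζ : IsPrimitiveRoot (ψ ζ) (n + 1) := hζ.map_of_injective ψ.injective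
  have heigen (j : Fin (n + 1)) : (ψ ζ ^ (j : ℕ) * t) ^ (n + 1) = φ a := by
    rw [mul_pow, ht, pow_right_comm, hψζ.pow_eq_one, one_pow, one_mul]
  have hrelation (I : Fin (n + 1) → ℕ) :
      ∑ i, (I i : L) * (ψ ζ ^ (i : ℕ) * t) = ψ (∑ i, (I i : K) * ζ ^ (i : ℕ)) * t := by
    simp only [map_sum, map_mul, map_natCast, map_pow, Finset.sum_mul, mul_assoc]
  rw [← injOn_linearDerivation_map_iff hφ, cyclicShiftMatrix_map,
    injOn_linearDerivation_cyclicShiftMatrix_iff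
      (injective_primitiveRoot_pow_mul hψζ ht0) heigen]
  simp only [hrelation, mul_eq_zero, ht0, or_false, map_eq_zero]

lemma exists_sum_mul_pow_eq_zero_iff_dvd [CharZero K] (hζ : IsPrimitiveRoot ζ (n + 1))
    (hp : (n + 1).Prime) :
    (∃ I : Fin (n + 1) → ℕ, ∑ i, I i = k ∧ ∑ i, (I i : K) * ζ ^ (i : ℕ) = 0) ↔ n + 1 ∣ k := by
  constructor
  · rintro ⟨I, hI, hI0⟩
    let q : Polynomial ℤ := ∑ i, Polynomial.C (I i : ℤ) * Polynomial.X ^ (i : ℕ)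
    have hroot : Polynomial.aeval ζ q = 0 := by simpa [q] using hI0
    have hdvd : Polynomial.cyclotomic (n + 1) ℤ ∣ q := by
      rw [Polynomial.cyclotomic_eq_minpoly hζ n.succ_pos]
      exact minpoly.isIntegrallyClosed_dvd (hζ.isIntegral n.succ_pos) hroot
    have hq1 : q.eval 1 = k := by simp [q, Polynomial.eval_finsetSum, ← hI]
    have : Fact (n + 1).Prime := ⟨hp⟩
    have hdvd1 := Polynomial.eval_dvd (x := 1) hdvd
    rw [Polynomial.eval_one_cyclotomic_prime, hq1] at hdvd1
    exact_mod_cast hdvd1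
  · rintro ⟨m, rfl⟩
    refine ⟨fun _ => m, by simp, ?_⟩
    rw [← Finset.mul_sum, Fin.sum_univ_eq_sum_range fun i => ζ ^ i,
      hζ.geom_sum_eq_zero hp.one_lt, mul_zero]

end RootsOfUnity

theorem kloosterman_D_injective_iff_general {K A : Type*} [Field K] [CommRing A] [IsDomain A]
    [Algebra K A] (n k : ℕ) {a : A} (ha : a ≠ 0) {ζ : K} (hζ : IsPrimitiveRoot ζ (n + 1)) :
    (Set.InjOn (linearDerivation (cyclicShiftMatrix n a))
        (homogeneousSubmodule (Fin (n + 1)) A k) ↔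
      ¬∃ I : Fin (n + 1) → ℕ, ∑ i, I i = k ∧ ∑ i, (I i : K) * ζ ^ (i : ℕ) = 0) ∧
    (CharZero K → (n + 1).Prime →
      (Set.InjOn (linearDerivation (cyclicShiftMatrix n a))
          (homogeneousSubmodule (Fin (n + 1)) A k) ↔
        ¬(n + 1) ∣ k)) := by
  have hinj := injOn_linearDerivation_cyclicShiftMatrix_iff_of_isPrimitiveRoot ha hζ k
  exact ⟨hinj, fun _ hp => hinj.trans (exists_sum_mul_pow_eq_zero_iff_dvd hζ hp).not⟩

/-- Let `n ≥ 1`, `k ≥ 1`, and `ζ` a primitive `(n+1)`-th root of unity.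
The map `D : P_k → P_k` is injective iff there is no tuple `I ∈ ℕ^{n+1}` with `|I| = k`
and `Σ_i I_i ζ^i = 0`.  In particular, if `n+1` is prime, `D` is injective on `P_k` iff
`(n+1) ∤ k`. -/
theorem kloosterman_D_injective_iff (n k : ℕ) (hn : 1 ≤ n) (hk : 1 ≤ k) (ζ : ℂ)
    (hζ : IsPrimitiveRoot ζ (n + 1)) :
    (Set.InjOn (kloostermanD n)
        (MvPolynomial.homogeneousSubmodule (Fin (n + 1)) (Polynomial ℂ) k) ↔
      ¬∃ I : Fin (n + 1) → ℕ,
        (∑ i, I i) = k ∧ (∑ i : Fin (n + 1), (I i : ℂ) * ζ ^ (i : ℕ)) = 0) ∧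
    (Nat.Prime (n + 1) →
      (Set.InjOn (kloostermanD n)
          (MvPolynomial.homogeneousSubmodule (Fin (n + 1)) (Polynomial ℂ) k) ↔
        ¬(n + 1) ∣ k)) := by
  rw [kloostermanD_eq_linearDerivation]
  exact (kloosterman_D_injective_iff_general n k Polynomial.X_ne_zero hζ).imp_right
    fun h => h inferInstance
end

section
/- Let k ≥ 1 be an integer and take n = 2, so R = ℂ[z][x₀, x₁, x₂] with derivation D(x₀) = x₁, D(x₁) = x₂, D(x₂) = z·x₀. Set η = z²x₀³ + z·x₁³ + x₂³ − 3z·x₀x₁x₂ (so that D(η) = 0). If 3 divides k, then the kernel of D : P_k → P_k is the free rank-one ℂ[z]-module ℂ[z]·η^{k/3}; if 3 does not divide k, then D : P_k → P_k is injective. -/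
/-!
Replace `ℂ[z]` by any domain `R` of characteristic zero and `z` by any nonzero element of it. Over
an algebraically closed field `F ⊇ R`, with `w ^ 3 = z` and `ζ` a primitive cube root of unity, the
linear form `λ²x₀ + λx₁ + x₂` is an eigenvector of `D` with eigenvalue `λ` for each of the three
cube roots `λ = w, wζ, wζ²` of `z`. In the coordinates `u₀, u₁, u₂` given by these forms, `D`
multiplies `u₀ᵃu₁ᵇu₂ᶜ` by `w(a + bζ + cζ²)`, which vanishes only if `a = b = c`. So a nonzero kernel
element of degree `k` is a multiple of `(u₀u₁u₂)^(k/3)`, and `u₀u₁u₂ = η`. The scalar lies in `R`,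
being the value at `(0, 0, 1)`, where `η` takes the value `1`.
-/

open MvPolynomial

/-- The `ℂ[z]`-linear derivation `D` on `ℂ[z][x₀, x₁, x₂]` with `D(x₀) = x₁`, `D(x₁) = x₂`,
`D(x₂) = z·x₀`. -/
noncomputable def kloostermanD₃ :
    Derivation (Polynomial ℂ) (MvPolynomial (Fin 3) (Polynomial ℂ))
      (MvPolynomial (Fin 3) (Polynomial ℂ)) :=
  MvPolynomial.mkDerivation (Polynomial ℂ)
    ![MvPolynomial.X 1, MvPolynomial.X 2, MvPolynomial.C Polynomial.X * MvPolynomial.X 0]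

/-- `η = z²x₀³ + z·x₁³ + x₂³ − 3z·x₀x₁x₂`. -/
noncomputable def kloostermanEta : MvPolynomial (Fin 3) (Polynomial ℂ) :=
  MvPolynomial.C (Polynomial.X ^ 2) * MvPolynomial.X 0 ^ 3 +
    MvPolynomial.C Polynomial.X * MvPolynomial.X 1 ^ 3 + MvPolynomial.X 2 ^ 3 -
    3 * (MvPolynomial.C Polynomial.X * (MvPolynomial.X 0 * MvPolynomial.X 1 * MvPolynomial.X 2))

namespace KloostermanKernel

section Derivation

variable {σ R : Type*} [CommSemiring R]

lemma map_derivation_comm {S B : Type*} [CommSemiring S] [CommSemiring B] [Algebra S B]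
    (φ : MvPolynomial σ R →+* B) (D : Derivation R (MvPolynomial σ R) (MvPolynomial σ R))
    (E : Derivation S B B) (hC : ∀ a, E (φ (C a)) = 0) (hX : ∀ i, φ (D (X i)) = E (φ (X i)))
    (p : MvPolynomial σ R) : φ (D p) = E (φ p) := by
  induction p using MvPolynomial.induction_on with
  | C a => rw [derivation_C, map_zero, hC]
  | add p q hp hq => simp only [map_add, hp, hq]
  | mul_X p i hp => simp only [Derivation.leibniz, smul_eq_mul, map_add, map_mul, hp, hX]

/-- The derivation of `R[xᵢ]` for which each `xᵢ` is an eigenvector, with eigenvalue `c i`. -/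
noncomputable def diagonalDerivation (c : σ → R) :
    Derivation R (MvPolynomial σ R) (MvPolynomial σ R) :=
  mkDerivation R fun i => C (c i) * X i

lemma diagonalDerivation_monomial (c : σ → R) (d : σ →₀ ℕ) (r : R) :
    diagonalDerivation c (monomial d r) = monomial d (Finsupp.weight c d * r) := by
  have hterm (i : σ) (hi : i ∈ d.support) :
      monomial (d - Finsupp.single i 1) (d i : R) • (C (c i) * X i) =
        monomial d (d i • c i) := by
    have hd : d - Finsupp.single i 1 + Finsupp.single i 1 = d :=
      Finsupp.sub_add_single_one_cancel (Finsupp.mem_support_iff.mp hi)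
    rw [smul_eq_mul, C_mul_X_eq_monomial, monomial_mul, hd, nsmul_eq_mul]
  rw [diagonalDerivation, mkDerivation_monomial, Finsupp.weight_apply, Finsupp.sum,
    Finset.sum_congr rfl hterm, ← map_sum, smul_monomial, smul_eq_mul, mul_comm, Finsupp.sum]

lemma coeff_diagonalDerivation (c : σ → R) (p : MvPolynomial σ R) (d : σ →₀ ℕ) :
    coeff d (diagonalDerivation c p) = Finsupp.weight c d * coeff d p := by
  induction p using MvPolynomial.induction_on' with
  | monomial e r =>
    classical
    rw [diagonalDerivation_monomial, coeff_monomial, coeff_monomial]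
    split_ifs with h
    · rw [h]
    · rw [mul_zero]
  | add p q hp hq => rw [map_add, coeff_add, coeff_add, hp, hq, mul_add]

lemma diagonalDerivation_eq_zero_iff [NoZeroDivisors R] {c : σ → R} {p : MvPolynomial σ R} :
    diagonalDerivation c p = 0 ↔ IsWeightedHomogeneous c p 0 := by
  simp only [MvPolynomial.ext_iff, coeff_diagonalDerivation, coeff_zero, mul_eq_zero,
    IsWeightedHomogeneous, or_iff_not_imp_right]

lemma bind₁_toMvPolynomial_bind₁ [Fintype σ] [DecidableEq σ] {M N : Matrix σ σ R}
    (h : M * N = 1) (p : MvPolynomial σ R) :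
    bind₁ N.toMvPolynomial (bind₁ M.toMvPolynomial p) = p := by
  simp only [bind₁_bind₁, ← Matrix.toMvPolynomial_mul, h, Matrix.toMvPolynomial_one, bind₁_X_left,
    AlgHom.id_apply]

end Derivation

/-- A derivation with a basis of linear eigenforms becomes diagonal in the coordinates that they
define. -/
lemma exists_isWeightedHomogeneous_of_eigenforms {σ R : Type*} [Fintype σ] [DecidableEq σ]
    [CommRing R] [NoZeroDivisors R] {M : Matrix σ σ R} (hM : IsUnit M.det) {c : σ → R}
    {D : Derivation R (MvPolynomial σ R) (MvPolynomial σ R)}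
    (hD : ∀ i, D (M.toMvPolynomial i) = C (c i) * M.toMvPolynomial i) {p : MvPolynomial σ R}
    {k : ℕ} (hp : p.IsHomogeneous k) (hDp : D p = 0) :
    ∃ q : MvPolynomial σ R, q.IsHomogeneous k ∧ IsWeightedHomogeneous c q 0 ∧
      bind₁ M.toMvPolynomial q = p := by
  have hleft (q : MvPolynomial σ R) :
      bind₁ M⁻¹.toMvPolynomial (bind₁ M.toMvPolynomial q) = q :=
    bind₁_toMvPolynomial_bind₁ (M.mul_nonsing_inv hM) q
  have hright : bind₁ M.toMvPolynomial (bind₁ M⁻¹.toMvPolynomial p) = p :=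
    bind₁_toMvPolynomial_bind₁ (M.nonsing_inv_mul hM) p
  refine ⟨bind₁ M⁻¹.toMvPolynomial p, ?_, ?_, hright⟩
  · simpa using hp.aeval _ M⁻¹.toMvPolynomial_isHomogeneous
  · have hcomm (q : MvPolynomial σ R) :
        bind₁ M.toMvPolynomial (diagonalDerivation c q) = D (bind₁ M.toMvPolynomial q) :=
      map_derivation_comm (bind₁ M.toMvPolynomial).toRingHom (diagonalDerivation c) D
        (fun a => by simp) (fun i => by simp [diagonalDerivation, hD]) q
    rw [← diagonalDerivation_eq_zero_iff, ← hleft (diagonalDerivation c _), hcomm, hright, hDp,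
      map_zero]

lemma exists_eq_C_mul_prod_X_pow {σ R : Type*} [CommSemiring R] [Fintype σ] [Nonempty σ]
    {q : MvPolynomial σ R} {k : ℕ} (hq : q.IsHomogeneous k) (hq₀ : q ≠ 0)
    (hconst : ∀ d ∈ q.support, ∀ i j, d i = d j) :
    Fintype.card σ ∣ k ∧ ∃ a : R, q = C a * (∏ i, X i) ^ (k / Fintype.card σ) := by
  have hexp (d : σ →₀ ℕ) (hd : d ∈ q.support) (i : σ) : k = Fintype.card σ * d i := by
    rw [hq.degree_eq_sum_deg_support hd, ← Finsupp.degree_apply, Finsupp.degree_eq_sum,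
      Finset.sum_congr rfl fun j _ => hconst d hd j i]
    simp
  obtain ⟨d, hd⟩ := support_nonempty.mpr hq₀
  have hdiv (e : σ →₀ ℕ) (he : e ∈ q.support) (i : σ) : e i = k / Fintype.card σ :=
    Nat.eq_div_of_mul_eq_right Fintype.card_ne_zero (hexp e he i).symm
  have huniq (e : σ →₀ ℕ) (he : e ∈ q.support) : e = d :=
    Finsupp.ext fun i => (hdiv e he i).trans (hdiv d hd i).symm
  refine ⟨⟨_, hexp d hd (Classical.arbitrary σ)⟩, coeff d q, ?_⟩
  calc q = monomial d (coeff d q) := by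
        classical
        ext e
        rw [coeff_monomial]
        split_ifs with h
        · rw [h]
        · exact notMem_support_iff.mp fun he => h (huniq e he).symm
    _ = C (coeff d q) * (∏ i, X i) ^ (k / Fintype.card σ) := by
        rw [monomial_eq, Finsupp.prod_fintype _ _ fun i => pow_zero _, ← Finset.prod_pow]
        simp only [hdiv d hd]

section CubeRoots

variable {R : Type*} [CommRing R] {ζ : R}

lemma one_add_add_sq_eq_zero [IsDomain R] (hζ : IsPrimitiveRoot ζ 3) : 1 + ζ + ζ ^ 2 = 0 := by
  simpa [Finset.sum_range_succ] using hζ.geom_sum_eq_zero (by norm_num)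

lemma eq_of_add_mul_add_mul_sq_eq_zero [CharZero R] (hζ : 1 + ζ + ζ ^ 2 = 0) {a b c : ℤ}
    (h : a + b * ζ + c * ζ ^ 2 = 0) : a = b ∧ b = c := by
  -- The left-hand side is the norm `(a + bζ + cζ²)(a + bζ² + cζ)`.
  have hnorm : a ^ 2 + b ^ 2 + c ^ 2 - a * b - b * c - c * a = 0 := by
    have : (a ^ 2 + b ^ 2 + c ^ 2 - a * b - b * c - c * a : R) = 0 := by
      linear_combination (a + b * ζ ^ 2 + c * ζ) * h -
        ((ζ - 1) * (b ^ 2 + c ^ 2) + a * b + a * c + b * c * (1 - ζ + ζ ^ 2)) * hζ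
    exact_mod_cast this
  constructor <;> nlinarith [sq_nonneg (a - b), sq_nonneg (b - c), sq_nonneg (c - a)]

lemma prod_add_cubeRoot_mul_eq (hζ : 1 + ζ + ζ ^ 2 = 0) (a b c : R) :
    (a + b + c) * (ζ ^ 2 * a + ζ * b + c) * (ζ ^ 4 * a + ζ ^ 2 * b + c) =
      a ^ 3 + b ^ 3 + c ^ 3 - 3 * (a * b * c) := by
  have hpair : (ζ ^ 2 * a + ζ * b + c) * (ζ ^ 4 * a + ζ ^ 2 * b + c) =
      a ^ 2 + b ^ 2 + c ^ 2 - a * b - a * c - b * c := by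
    linear_combination (a ^ 2 * (ζ - 1) * (1 + ζ ^ 3) + b ^ 2 * (ζ - 1) +
      a * b * (1 - ζ + ζ ^ 3) + a * c * (1 - ζ + ζ ^ 2) + b * c) * hζ
  linear_combination (a + b + c) * hpair

end CubeRoots

section Cyclic

variable {R : Type*} [CommRing R]

/-- The derivation `x₀ ↦ x₁ ↦ x₂ ↦ z x₀` of `R[x₀, x₁, x₂]`. -/
noncomputable def cyclicDerivation (z : R) :
    Derivation R (MvPolynomial (Fin 3) R) (MvPolynomial (Fin 3) R) :=
  mkDerivation R ![X 1, X 2, C z * X 0]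

lemma cyclicDerivation_X_zero (z : R) : cyclicDerivation z (X 0) = X 1 :=
  mkDerivation_X ..

lemma cyclicDerivation_X_one (z : R) : cyclicDerivation z (X 1) = X 2 :=
  mkDerivation_X ..

lemma cyclicDerivation_X_two (z : R) : cyclicDerivation z (X 2) = C z * X 0 :=
  mkDerivation_X ..

/-- The norm form `η` of `x₂ + λx₁ + λ²x₀`, taken from `R[λ]/(λ³ - z)` down to `R`. -/
noncomputable def cyclicNorm (z : R) : MvPolynomial (Fin 3) R :=
  C (z ^ 2) * X 0 ^ 3 + C z * X 1 ^ 3 + X 2 ^ 3 - 3 * (C z * (X 0 * X 1 * X 2))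

lemma cyclicDerivation_cyclicNorm (z : R) : cyclicDerivation z (cyclicNorm z) = 0 := by
  have h3 : cyclicDerivation z 3 = 0 := by exact_mod_cast Derivation.map_natCast _ 3
  simp only [cyclicNorm, map_add, map_sub, map_pow, Derivation.leibniz, Derivation.leibniz_pow,
    derivation_C, h3, cyclicDerivation_X_zero, cyclicDerivation_X_one, cyclicDerivation_X_two,
    smul_eq_mul, nsmul_eq_mul, Nat.cast_ofNat]
  ring

lemma eval_cyclicNorm (z : R) : eval ![0, 0, 1] (cyclicNorm z) = 1 := by
  simp [cyclicNorm]

lemma isHomogeneous_cyclicNorm (z : R) : (cyclicNorm z).IsHomogeneous 3 := by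
  have hX (i : Fin 3) : (X i : MvPolynomial (Fin 3) R).IsHomogeneous 1 := isHomogeneous_X _ i
  have hcube (i : Fin 3) : (X i ^ 3 : MvPolynomial (Fin 3) R).IsHomogeneous 3 :=
    isHomogeneous_X_pow i 3
  have hmixed : (3 * (C z * (X 0 * X 1 * X 2)) : MvPolynomial (Fin 3) R).IsHomogeneous 3 := by
    rw [← map_ofNat C 3]
    exact ((((hX 0).mul (hX 1)).mul (hX 2)).C_mul _).C_mul _
  exact ((((hcube 0).C_mul _).add ((hcube 1).C_mul _)).add (hcube 2)).sub hmixed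

lemma map_cyclicNorm {S : Type*} [CommRing S] (f : R →+* S) (z : R) :
    map f (cyclicNorm z) = cyclicNorm (f z) := by
  simp [cyclicNorm]

lemma map_cyclicDerivation {S : Type*} [CommRing S] (f : R →+* S) (z : R)
    (p : MvPolynomial (Fin 3) R) :
    map f (cyclicDerivation z p) = cyclicDerivation (f z) (map f p) := by
  refine map_derivation_comm (map f) _ _ (fun a => by simp) (fun i => ?_) p
  fin_cases i <;> simp [cyclicDerivation]

lemma toMvPolynomial_projVandermonde_one (c : Fin 3 → R) (i : Fin 3) :
    (Matrix.projVandermonde 1 c).toMvPolynomial i = C (c i ^ 2) * X 0 + C (c i) * X 1 + X 2 := by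
  simp [Matrix.toMvPolynomial, Fin.sum_univ_three, Matrix.projVandermonde_apply,
    ← C_mul_X_eq_monomial, Fin.rev]

lemma cyclicDerivation_toMvPolynomial_projVandermonde {c : Fin 3 → R} {z : R}
    (hc : ∀ i, c i ^ 3 = z) (i : Fin 3) :
    cyclicDerivation z ((Matrix.projVandermonde 1 c).toMvPolynomial i) =
      C (c i) * (Matrix.projVandermonde 1 c).toMvPolynomial i := by
  have hC : C (c i) ^ 3 = (C z : MvPolynomial (Fin 3) R) := by rw [← map_pow, hc]
  simp only [toMvPolynomial_projVandermonde_one, map_add, Derivation.leibniz,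
    derivation_C, cyclicDerivation_X_zero, cyclicDerivation_X_one, cyclicDerivation_X_two,
    smul_eq_mul]
  rw [map_pow]
  linear_combination -X 0 * hC

lemma isUnit_det_projVandermonde_one {F : Type*} [Field F] {n : ℕ} {c : Fin n → F}
    (hc : Function.Injective c) : IsUnit (Matrix.projVandermonde 1 c).det := by
  rw [isUnit_iff_ne_zero, Matrix.det_projVandermonde]
  simp only [Finset.prod_ne_zero_iff, Finset.mem_Ioi, Pi.one_apply, one_mul, sub_ne_zero]
  exact fun i _ j hij => hc.ne hij.ne

lemma prod_eigenforms_eq_cyclicNorm {ζ : R} (hζ : 1 + ζ + ζ ^ 2 = 0) (w : R) :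
    ∏ i : Fin 3, (Matrix.projVandermonde 1 fun i : Fin 3 => w * ζ ^ (i : ℕ)).toMvPolynomial i =
      cyclicNorm (w ^ 3) := by
  have hC : 1 + C ζ + C ζ ^ 2 = (0 : MvPolynomial (Fin 3) R) := by
    simpa using congrArg (C (σ := Fin 3)) hζ
  have h := prod_add_cubeRoot_mul_eq hC (C w ^ 2 * X 0) (C w * X 1) (X 2)
  simp only [Fin.prod_univ_three, toMvPolynomial_projVandermonde_one, cyclicNorm, Fin.val_zero,
    Fin.val_one, Fin.val_two, map_mul, map_pow]
  linear_combination h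

end Cyclic

lemma three_dvd_and_exists_eq_C_mul_cyclicNorm_pow {F : Type*} [Field F] [CharZero F] {w ζ : F}
    (hw : w ≠ 0) (hζ : IsPrimitiveRoot ζ 3) {p : MvPolynomial (Fin 3) F} {k : ℕ}
    (hp : p.IsHomogeneous k) (hp₀ : p ≠ 0) (hD : cyclicDerivation (w ^ 3) p = 0) :
    3 ∣ k ∧ ∃ a : F, p = C a * cyclicNorm (w ^ 3) ^ (k / 3) := by
  have hζ₀ : 1 + ζ + ζ ^ 2 = 0 := one_add_add_sq_eq_zero hζ
  let c : Fin 3 → F := fun i => w * ζ ^ (i : ℕ)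
  have hc_inj : Function.Injective c := fun i j hij =>
    Fin.ext (hζ.pow_inj i.isLt j.isLt (mul_left_cancel₀ hw hij))
  have hc_cube (i : Fin 3) : c i ^ 3 = w ^ 3 := by
    rw [mul_pow, ← pow_mul, mul_comm (i : ℕ), pow_mul, hζ.pow_eq_one, one_pow, mul_one]
  obtain ⟨q, hq, hqc, rfl⟩ := exists_isWeightedHomogeneous_of_eigenforms
    (isUnit_det_projVandermonde_one hc_inj)
    (cyclicDerivation_toMvPolynomial_projVandermonde hc_cube) hp hD
  have hconst (d : Fin 3 →₀ ℕ) (hd : d ∈ q.support) (i j : Fin 3) : d i = d j := by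
    have hsum : ((d 0 : ℤ) + (d 1 : ℤ) * ζ + (d 2 : ℤ) * ζ ^ 2 : F) = 0 := by
      refine (mul_eq_zero.mp ?_).resolve_left hw
      rw [← hqc (mem_support_iff.mp hd), Finsupp.weight_eq_sum, Fin.sum_univ_three]
      simp only [c, nsmul_eq_mul, Int.cast_natCast, Fin.val_zero, Fin.val_one, Fin.val_two]
      ring
    have := eq_of_add_mul_add_mul_sq_eq_zero hζ₀ hsum
    fin_cases i <;> fin_cases j <;> simp <;> omega
  have hq₀ : q ≠ 0 := fun h => hp₀ (by rw [h, map_zero])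
  obtain ⟨hk, a, ha⟩ := exists_eq_C_mul_prod_X_pow hq hq₀ hconst
  rw [Fintype.card_fin] at hk ha
  refine ⟨hk, a, ?_⟩
  rw [ha]
  simp only [map_mul, map_pow, map_prod, bind₁_C_right, bind₁_X_right, c,
    prod_eigenforms_eq_cyclicNorm hζ₀]

section Domain

variable {R : Type*} [CommRing R] [IsDomain R] [CharZero R] {z : R}

lemma three_dvd_and_eq_eval_smul_cyclicNorm_pow (hz : z ≠ 0) {p : MvPolynomial (Fin 3) R} {k : ℕ}
    (hp : p.IsHomogeneous k) (hp₀ : p ≠ 0) (hD : cyclicDerivation z p = 0) :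
    3 ∣ k ∧ p = eval ![0, 0, 1] p • cyclicNorm z ^ (k / 3) := by
  let F := AlgebraicClosure (FractionRing R)
  let f : R →+* F := (algebraMap (FractionRing R) F).comp (algebraMap R (FractionRing R))
  have hf : Function.Injective f :=
    (algebraMap (FractionRing R) F).injective.comp (IsFractionRing.injective R (FractionRing R))
  have hmap : Function.Injective (map f : MvPolynomial (Fin 3) R → _) := map_injective f hf
  obtain ⟨ζ, hζ⟩ := HasEnoughRootsOfUnity.exists_primitiveRoot F 3
  obtain ⟨w, hw⟩ := IsAlgClosed.exists_pow_nat_eq (f z) (n := 3) (by norm_num)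
  have hw₀ : w ≠ 0 := by
    rintro rfl
    exact hz (hf (by simpa using hw.symm))
  obtain ⟨hk, a, ha⟩ := three_dvd_and_exists_eq_C_mul_cyclicNorm_pow hw₀ hζ (hp.map f)
    ((map_ne_zero_iff _ hmap).mpr hp₀) (by rw [hw, ← map_cyclicDerivation, hD, map_zero])
  rw [hw] at ha
  have ha_eval : a = f (eval ![0, 0, 1] p) := by
    have hpt : f ∘ ![0, 0, 1] = ![0, 0, 1] := by ext i; fin_cases i <;> simp
    rw [map_eval, hpt, ha]
    simp [eval_cyclicNorm]
  refine ⟨hk, hmap ?_⟩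
  rw [ha, ha_eval, smul_eq_C_mul, map_mul, map_C, map_pow, map_cyclicNorm]

end Domain

end KloostermanKernel

open KloostermanKernel in
theorem kloosterman_kernel_D_n_two_general {R : Type*} [CommRing R] [IsDomain R] [CharZero R]
    {z : R} (hz : z ≠ 0) (k : ℕ) :
    (3 ∣ k →
      cyclicNorm z ^ (k / 3) ∈ homogeneousSubmodule (Fin 3) R k ∧
        cyclicDerivation z (cyclicNorm z ^ (k / 3)) = 0 ∧
        (∀ c : R, c • cyclicNorm z ^ (k / 3) = 0 → c = 0) ∧
        (∀ p ∈ homogeneousSubmodule (Fin 3) R k,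
          cyclicDerivation z p = 0 ↔ ∃ c : R, p = c • cyclicNorm z ^ (k / 3))) ∧
    (¬3 ∣ k → Set.InjOn (cyclicDerivation z) (homogeneousSubmodule (Fin 3) R k)) := by
  have hD : cyclicDerivation z (cyclicNorm z ^ (k / 3)) = 0 := by
    simp [Derivation.leibniz_pow, cyclicDerivation_cyclicNorm]
  refine ⟨fun hk => ⟨?_, hD, fun c hc => ?_, fun p hp => ⟨fun hDp => ?_, ?_⟩⟩, fun hk => ?_⟩
  · simpa [Nat.mul_div_cancel' hk] using (isHomogeneous_cyclicNorm z).pow (k / 3)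
  · simpa [smul_eval, eval_cyclicNorm] using congrArg (eval ![0, 0, 1]) hc
  · rcases eq_or_ne p 0 with rfl | hp₀
    · exact ⟨0, (zero_smul _ _).symm⟩
    · exact ⟨_, (three_dvd_and_eq_eval_smul_cyclicNorm_pow hz hp hp₀ hDp).2⟩
  · rintro ⟨c, rfl⟩
    rw [Derivation.map_smul, hD, smul_zero]
  · refine fun p hp q hq hpq => sub_eq_zero.mp (by_contra fun hne => hk ?_)
    exact (three_dvd_and_eq_eval_smul_cyclicNorm_pow hz (Submodule.sub_mem _ hp hq) hne
      (by rw [map_sub, hpq, sub_self])).1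

/-- For `n = 2`: if `3 ∣ k` the kernel of `D : P_k → P_k` is the free
rank-one `ℂ[z]`-module `ℂ[z]·η^{k/3}`; if `3 ∤ k` then `D : P_k → P_k` is injective. -/
theorem kloosterman_kernel_D_n_two (k : ℕ) (hk : 1 ≤ k) :
    (3 ∣ k →
      kloostermanEta ^ (k / 3) ∈
          MvPolynomial.homogeneousSubmodule (Fin 3) (Polynomial ℂ) k ∧
        kloostermanD₃ (kloostermanEta ^ (k / 3)) = 0 ∧
        (∀ c : Polynomial ℂ, c • kloostermanEta ^ (k / 3) = 0 → c = 0) ∧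
        (∀ p ∈ MvPolynomial.homogeneousSubmodule (Fin 3) (Polynomial ℂ) k,
          kloostermanD₃ p = 0 ↔ ∃ c : Polynomial ℂ, p = c • kloostermanEta ^ (k / 3))) ∧
    (¬3 ∣ k →
      Set.InjOn (kloostermanD₃)
        (MvPolynomial.homogeneousSubmodule (Fin 3) (Polynomial ℂ) k)) :=
  kloosterman_kernel_D_n_two_general Polynomial.X_ne_zero k
end

section
/- Let V be a finite-dimensional ℂ-vector space, N : V → V a nilpotent linear map, and E : V → V any linear map. Define the ℂ-linear map θ on formal power series with coefficients in V by θ(Σ_{p≥0} v_p z^p) = Σ_{p≥0} (p·v_p + N(v_p) + E(v_{p−1})) z^p, where v_{−1} = 0 (i.e. θ(f) = z·f′ + N f + z·E f). Then: (i) every power series with zero constant term lies in the image of θ; and (ii) for c ∈ V, the constant power series with value c lies in the image of θ if and only if c lies in the image of N. Consequently, the inclusion of constants induces an isomorphism coker(N) ≅ coker(θ). -/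
/-!
For `p ≥ 1` the operator `p + N` is the sum of a unit and a nilpotent commuting with it, hence a
unit. The equation `θ f = g` reads `N (f 0) = g 0` in degree `0` and
`(p + N) (f p) = g p - E (f (p - 1))` in degree `p ≥ 1`, so it can be solved recursively, and the
only obstruction is that `g 0` lie in the range of `N`.
-/

section

variable {R V : Type*} [Ring R] [AddCommGroup V] [Module R V]

/-- The operator `θ = z d/dz + N + z E` on formal power series with coefficients in `V`; a power
series is encoded by its sequence of coefficients. -/
def theta (N E : V →ₗ[R] V) : (ℕ → V) →ₗ[R] (ℕ → V) where
  toFun f p := (p : R) • f p + N (f p) + if p = 0 then 0 else E (f (p - 1))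
  map_add' f g := by
    ext p
    cases p with
    | zero => simp
    | succ p =>
      simp only [Pi.add_apply, smul_add, map_add, p.succ_ne_zero, if_false, Nat.add_sub_cancel]
      abel
  map_smul' r f := by
    ext p
    cases p <;> simp [smul_smul, add_mul, mul_add, Nat.cast_comm]

theorem theta_apply (N E : V →ₗ[R] V) (f : ℕ → V) (p : ℕ) :
    theta N E f p = (p : R) • f p + N (f p) + if p = 0 then 0 else E (f (p - 1)) :=
  rfl

theorem theta_apply_zero (N E : V →ₗ[R] V) (f : ℕ → V) : theta N E f 0 = N (f 0) := by
  simp [theta_apply]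

theorem theta_apply_succ (N E : V →ₗ[R] V) (f : ℕ → V) (p : ℕ) :
    theta N E f (p + 1) = (((p + 1 : ℕ) : Module.End R V) + N) (f (p + 1)) + E (f p) := by
  simp [theta_apply, add_smul, Nat.cast_smul_eq_nsmul]

theorem mem_range_theta_iff_of_surjective {N : V →ₗ[R] V}
    (hN : ∀ p : ℕ, Function.Surjective (((p + 1 : ℕ) : Module.End R V) + N))
    (E : V →ₗ[R] V) (g : ℕ → V) :
    g ∈ LinearMap.range (theta N E) ↔ g 0 ∈ LinearMap.range N := by
  constructor
  · rintro ⟨f, rfl⟩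
    exact ⟨f 0, (theta_apply_zero N E f).symm⟩
  · rintro ⟨v₀, hv₀⟩
    choose nextCoeff h_nextCoeff using fun (p : ℕ) (v : V) => hN p (g (p + 1) - E v)
    let f : ℕ → V := fun p => Nat.rec v₀ nextCoeff p
    refine ⟨f, funext fun p => ?_⟩
    cases p with
    | zero => exact (theta_apply_zero N E f).trans hv₀
    | succ p => exact (theta_apply_succ N E f p).trans (eq_sub_iff_add_eq.mp (h_nextCoeff p (f p)))

theorem isUnit_natCast_moduleEnd {n : ℕ} (hn : IsUnit (n : R)) :
    IsUnit (n : Module.End R V) := by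
  have coe_natCast : ⇑(n : Module.End R V) = fun v => (n : R) • v :=
    funext fun v => (Nat.cast_smul_eq_nsmul R n v).symm
  rw [Module.End.isUnit_iff, coe_natCast]
  exact hn.smul_bijective

theorem surjective_natCast_add_of_isNilpotent [Algebra ℚ R] {N : Module.End R V}
    (hN : IsNilpotent N) {n : ℕ} (hn : n ≠ 0) :
    Function.Surjective ((n : Module.End R V) + N) := by
  have isUnit_n : IsUnit (n : R) := by
    simpa using (IsUnit.mk0 (n : ℚ) (Nat.cast_ne_zero.mpr hn)).map (algebraMap ℚ R)
  have isUnit_add : IsUnit ((n : Module.End R V) + N) :=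
    hN.isUnit_add_left_of_commute (isUnit_natCast_moduleEnd isUnit_n) (Nat.commute_cast N n)
  exact ((Module.End.isUnit_iff _).mp isUnit_add).surjective

theorem theta_powerseries_image_general [Algebra ℚ R] {N : V →ₗ[R] V} (hN : IsNilpotent N)
    (E : V →ₗ[R] V) (g : ℕ → V) :
    g ∈ LinearMap.range (theta N E) ↔ g 0 ∈ LinearMap.range N :=
  mem_range_theta_iff_of_surjective
    (fun p => surjective_natCast_add_of_isNilpotent hN p.succ_ne_zero) E g

end

/-- Let `V` be a finite-dimensional `ℂ`-vector space, `N : V → V` nilpotent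
and `E : V → V` arbitrary linear maps.  Define `θ` on formal power series `Σ v_p z^p` by
`θ(f)_p = p•v_p + N(v_p) + E(v_{p-1})` (with `v_{-1} = 0`).  Then:
(i) every power series with zero constant term lies in the image of `θ`;
(ii) for `c ∈ V`, the constant power series `c` lies in the image of `θ` iff `c ∈ im N`. -/
theorem theta_powerseries_image (V : Type*) [AddCommGroup V] [Module ℂ V]
    [FiniteDimensional ℂ V] (N E : V →ₗ[ℂ] V) (hN : IsNilpotent N) :
    (∀ g : ℕ → V, g 0 = 0 →
      ∃ f : ℕ → V, ∀ p : ℕ,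
        (p : ℂ) • f p + N (f p) + (if p = 0 then 0 else E (f (p - 1))) = g p) ∧
    (∀ c : V,
      (∃ f : ℕ → V, ∀ p : ℕ,
        (p : ℂ) • f p + N (f p) + (if p = 0 then 0 else E (f (p - 1))) =
          (if p = 0 then c else 0)) ↔
      c ∈ LinearMap.range N) := by
  simp only [← theta_apply, ← funext_iff]
  exact ⟨fun g hg => (theta_powerseries_image_general hN E g).mpr (hg ▸ zero_mem _),
    fun c => theta_powerseries_image_general hN E fun p => if p = 0 then c else 0⟩
end
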